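/- The following two statements are equivalent: (i) for all integers d ≥ 1 and q ≥ 1, every continuous map f : Δ_{d-1}^{(d+1)(q-1)} → ℝ^d admits a winding partition (the Winding Number Conjecture); (ii) for all integers d ≥ 1 and q ≥ 1, every continuous map F : Δ^{(d+1)(q-1)} → ℝ^d admits a Tverberg partition (the Topological Tverberg Theorem). -/

import Mathlib

open scoped BigOperators

noncomputable section

/-- Euclidean space `ℝ^d`. -/
abbrev Euc (d : ℕ) : Type := EuclideanSpace ℝ (Fin d)

/-- The standard `N`-simplex `Δ^N ⊆ ℝ^{N+1}`. -/
def stdSimp (N : ℕ) : Set (Fin (N+1) → ℝ) :=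
  {x | (∀ i, 0 ≤ x i) ∧ ∑ i, x i = 1}

/-- The face `σ_S` of `Δ^N` spanned by the vertices in `S`. -/
def simpFace {N : ℕ} (S : Finset (Fin (N+1))) : Set (Fin (N+1) → ℝ) :=
  {x ∈ stdSimp N | ∀ i ∉ S, x i = 0}

/-- The `k`-skeleton `Δ_k^N` of the standard `N`-simplex. -/
def skel (N k : ℕ) : Set (Fin (N+1) → ℝ) :=
  {x ∈ stdSimp N | {i | x i ≠ 0}.ncard ≤ k + 1}

/-- A Tverberg partition for (the relevant restriction of) `f`: a set of `q`
pairwise disjoint nonempty vertex subsets whose faces have images with a common point. -/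
def IsTverbergPartition (q : ℕ) {N d : ℕ}
    (f : (Fin (N+1) → ℝ) → Euc d) (P : Finset (Finset (Fin (N+1)))) : Prop :=
  P.card = q ∧ (∀ S ∈ P, S.Nonempty) ∧
  (∀ S ∈ P, ∀ T ∈ P, S ≠ T → Disjoint S T) ∧
  (⋂ S ∈ P, f '' simpFace S).Nonempty

/-- The boundary `∂σ_S` of the face `σ_S`. -/
def simpFaceBoundary {N : ℕ} (S : Finset (Fin (N+1))) : Set (Fin (N+1) → ℝ) :=
  {x ∈ simpFace S | ∃ i ∈ S, x i = 0}

/-- `p ∈ W_{≠0}(f|_{∂σ_S})`: either `p` is in the image of the boundary, or the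
corestriction of `f|_{∂σ_S}` to `ℝ^d \ {p}` is not nullhomotopic (there is no
continuous map agreeing with `f` on `∂σ_S` that is homotopic to a constant). -/
def InWne (d : ℕ) {N : ℕ} (f : (Fin (N+1) → ℝ) → Euc d)
    (S : Finset (Fin (N+1))) (p : Euc d) : Prop :=
  p ∈ f '' simpFaceBoundary S ∨
  ¬ ∃ (g : C(↥(simpFaceBoundary S), ↥({p}ᶜ : Set (Euc d))))
      (y : ↥({p}ᶜ : Set (Euc d))),
      (∀ x : ↥(simpFaceBoundary S), (g x : Euc d) = f ↑x) ∧
      g.Homotopic (ContinuousMap.const _ y)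

/-- A winding partition (in dimension `d`) for `f` defined on the `(d-1)`-skeleton:
`q` pairwise disjoint nonempty vertex subsets, each of size at most `d+1`, together
with a winding point `p`. -/
def IsWindingPartition (d q : ℕ) {N : ℕ}
    (f : (Fin (N+1) → ℝ) → Euc d) (P : Finset (Finset (Fin (N+1)))) : Prop :=
  P.card = q ∧ (∀ S ∈ P, S.Nonempty) ∧ (∀ S ∈ P, S.card ≤ d + 1) ∧
  (∀ S ∈ P, ∀ T ∈ P, S ≠ T → Disjoint S T) ∧
  ∃ p : Euc d, ∀ S ∈ P,
    (S.card ≤ d → p ∈ f '' simpFace S) ∧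
    (S.card = d + 1 → InWne d f S p)

/-!
A winding partition of a map of the whole simplex is a Tverberg partition, because a face is
contractible: the map on its boundary is nullhomotopic in the complement of every point
that the map on the face misses.

Conversely, by compactness it suffices to find winding partitions for a dense class of maps `g` on
the simplex with `(d + 1) * (q - 1) + 1` vertices. Choose `g` such that intersections of images of
pairwise disjoint faces have their expected dimension whenever it is nonpositive; such intersections
then form a finite set `Q` in `ℝ^d`. For a function `l` injective on `Q`, there is a family of maps
`Γ t`, all equal to `g` on the `(d - 1)`-skeleton, such that for `p ∈ Q` the map `Γ (l p)` avoids
`p` on all `d`-faces `σ_T` with `p ∉ W_{≠0}(g|∂σ_T)`.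

Add `q - 1` vertices to the simplex, so that Tverberg's theorem applies to maps to `ℝ^d × ℝ`. For a
point of the larger simplex, let `x` be its coordinates at the old vertices, `slack x` its mass at
the new ones and `depth x` the distance of `x` from the vectors with at most `d` nonzero
coordinates, and map it to the pair of `h x = Γ (slack x / depth x) (x / ∑ x)` and
`slack x - depth x * l (h x)`. In a Tverberg partition, some face has no new vertex and some face
meets the old simplex in dimension less than `d`; on the first the last coordinate is at most `0`,
on the second at least `0`, so the common value is `(p, 0)`. Wherever `x` has at most `d` nonzero
coordinates, `g` takes the value `p`, and counting vertices gives `p ∈ Q` and excludes more than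
`d + 1` nonzero coordinates. If there are `d + 1`, then `slack x / depth x = l p`, so `Γ (l p)`
takes the value `p` on that face, which forces `p ∈ W_{≠0}`.
-/

section Extension

open Set Filter
open scoped Topology unitInterval

universe u v

variable {X : Type u} {E : Type v} [TopologicalSpace X] [TopologicalSpace E]

theorem exists_continuousMap_eqOn [NormalSpace X] [TietzeExtension.{u, v} E] {A : Set X}
    (hA : IsClosed A) {f : X → E} (hf : ContinuousOn f A) : ∃ g : C(X, E), EqOn g f A := by
  obtain ⟨g, hg⟩ := ContinuousMap.exists_restrict_eq hA ⟨A.domRestrict f, hf.domRestrict⟩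
  exact ⟨g, fun x hx => congrArg (fun k => k ⟨x, hx⟩) hg⟩

theorem exists_continuousMap_eqOn_union [NormalSpace X] [TietzeExtension.{u, v} E] {A B : Set X}
    (hA : IsClosed A) (hB : IsClosed B) {f₁ f₂ : X → E} (hf₁ : ContinuousOn f₁ A)
    (hf₂ : ContinuousOn f₂ B) (h : EqOn f₁ f₂ (A ∩ B)) :
    ∃ g : C(X, E), EqOn g f₁ A ∧ EqOn g f₂ B := by
  classical
  have hA₁ : EqOn (B.piecewise f₂ f₁) f₁ A := fun x hx => by
    by_cases hxB : x ∈ B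
    · rw [piecewise_eq_of_mem B f₂ f₁ hxB, h ⟨hx, hxB⟩]
    · exact piecewise_eq_of_notMem B f₂ f₁ hxB
  have hB₂ : EqOn (B.piecewise f₂ f₁) f₂ B := piecewise_eqOn B f₂ f₁
  obtain ⟨g, hg⟩ := exists_continuousMap_eqOn (hA.union hB)
    ((hf₁.congr hA₁).union_of_isClosed (hf₂.congr hB₂) hA hB)
  exact ⟨g, (hg.mono subset_union_left).trans hA₁, (hg.mono subset_union_right).trans hB₂⟩

theorem exists_continuousMap_eqOn_norm_le {F : Type v} [NormedAddCommGroup F] [NormedSpace ℝ F]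
    [FiniteDimensional ℝ F] [NormalSpace X] {A : Set X} (hA : IsClosed A) {f : X → F}
    (hf : ContinuousOn f A) {r : ℝ} (hr : 0 < r) (hfr : ∀ x ∈ A, ‖f x‖ ≤ r) :
    ∃ g : C(X, F), EqOn g f A ∧ ∀ x, ‖g x‖ ≤ r := by
  have := Metric.instTietzeExtensionClosedBall.{u} ℝ (0 : F) hr
  obtain ⟨g, hgr, hg⟩ := ContinuousMap.exists_forall_mem_restrict_eq hA
    (t := Metric.closedBall (0 : F) r) (f := ⟨A.domRestrict f, hf.domRestrict⟩)
    fun x => mem_closedBall_zero_iff.2 (hfr x x.2)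
  exact ⟨g, fun x hx => congrArg (fun k => k ⟨x, hx⟩) hg,
    fun x => mem_closedBall_zero_iff.1 (hgr x)⟩

theorem exists_continuousMap_injOn_unitInterval [NormalSpace X] [T1Space X] {Q : Set X}
    (hQ : Q.Finite) : ∃ l : C(X, I), InjOn l Q := by
  obtain ⟨n, hn⟩ := countable_iff_exists_injOn.1 hQ.countable
  obtain ⟨l, hl⟩ := exists_continuousMap_eqOn (E := I) (f := fun x =>
    ⟨((n x : ℝ) + 1)⁻¹, by positivity, inv_le_one_of_one_le₀ (by simp)⟩)
    hQ.isClosed (hQ.continuousOn _)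
  refine ⟨l, InjOn.congr (fun x hx y hy hxy => hn hx hy ?_) hl.symm⟩
  simpa using congrArg Subtype.val hxy

theorem normalSpace_of_prod_unitInterval [NormalSpace (X × I)] : NormalSpace X := by
  have hrange : range (fun x : X => (x, (0 : I))) = Prod.snd ⁻¹' {0} := by
    ext ⟨x, t⟩
    simp [eq_comm]
  exact Topology.IsClosedEmbedding.normalSpace
    ⟨isEmbedding_prodMkLeft 0, hrange ▸ isClosed_singleton.preimage continuous_snd⟩

theorem exists_continuousMap_forall_apply_mem [NormalSpace X] {A : Set X} (hA : IsClosed A)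
    {U : Set E} (hU : IsOpen U) (G : C(X × I, E)) (hGA : ∀ x ∈ A, ∀ t, G (x, t) ∈ U)
    (hG₁ : ∀ x, G (x, 1) ∈ U) : ∃ l : C(X, I), (∀ x ∈ A, l x = 0) ∧ ∀ x, G (x, l x) ∈ U := by
  have hV : IsClosed (Prod.fst '' (G ⁻¹' Uᶜ)) :=
    isClosedMap_fst_of_compactSpace _ (hU.isClosed_compl.preimage G.continuous)
  have hAV : Disjoint A (Prod.fst '' (G ⁻¹' Uᶜ)) := by
    refine disjoint_left.2 ?_
    rintro _ hx ⟨⟨x, t⟩, hxt, rfl⟩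
    exact hxt (hGA x hx t)
  obtain ⟨l, hl0, hl1, hl⟩ := exists_continuous_zero_one_of_isClosed hA hV hAV
  have hGU (x : X) : G (x, ⟨l x, hl x⟩) ∈ U := by
    by_contra hx
    have hlx : (⟨l x, hl x⟩ : I) = 1 := Subtype.ext (hl1 ⟨_, hx, rfl⟩)
    rw [hlx] at hx
    exact hx (hG₁ x)
  exact ⟨⟨fun x => ⟨l x, hl x⟩, by fun_prop⟩, fun x hx => Subtype.ext (hl0 hx), hGU⟩

theorem exists_extension_of_homotopic [NormalSpace (X × I)] [TietzeExtension.{u, v} E]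
    {A : Set X} (hA : IsClosed A) {U : Set E} (hU : IsOpen U) {g₀ g₁ : C(A, U)}
    (h : g₀.Homotopic g₁) {G₁ : C(X, U)} (hG₁ : G₁.restrict A = g₁) :
    ∃ G₀ : C(X, U), G₀.restrict A = g₀ := by
  classical
  have : NormalSpace X := normalSpace_of_prod_unitInterval
  obtain ⟨H⟩ := h
  let f : X × I → E := fun z => if hz : z.1 ∈ A then H (z.2, ⟨z.1, hz⟩) else G₁ z.1
  have hfA (a : A) (t : I) : f (a, t) = H (t, a) := by simp [f]
  have hf : ContinuousOn f (Prod.fst ⁻¹' A) := by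
    rw [continuousOn_iff_continuous_domRestrict]
    have : (Prod.fst ⁻¹' A).domRestrict f = fun z => (H (z.1.2, ⟨z.1.1, z.2⟩) : E) :=
      funext fun z => hfA ⟨z.1.1, z.2⟩ z.1.2
    rw [this]
    fun_prop
  have hfG₁ : EqOn f (fun z => G₁ z.1) (Prod.fst ⁻¹' A ∩ Prod.snd ⁻¹' {1}) := by
    rintro ⟨x, t⟩ ⟨hx, rfl⟩
    rw [hfA ⟨x, hx⟩, H.apply_one, ← hG₁]
    rfl
  -- The extension `G` takes values in `E`; it stays in `U` only over a neighbourhood of `A`.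
  obtain ⟨G, hGA, hG1⟩ := exists_continuousMap_eqOn_union (hA.preimage continuous_fst)
    (isClosed_singleton.preimage (continuous_snd (X := X))) hf (by fun_prop) hfG₁
  obtain ⟨l, hl, hGU⟩ := exists_continuousMap_forall_apply_mem hA hU G
    (fun x hx t => by rw [hGA hx, hfA ⟨x, hx⟩]; exact (H _).2)
    fun x => by rw [hG1 rfl]; exact (G₁ x).2
  refine ⟨⟨fun x => ⟨_, hGU x⟩, by fun_prop⟩, ContinuousMap.ext fun x => Subtype.ext ?_⟩
  simp only [ContinuousMap.restrict_apply, ContinuousMap.coe_mk, hl x x.2]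
  rw [hGA x.2, hfA, H.apply_zero]

end Extension

section UniformLimit

open Set Filter
open scoped Topology

variable {X Y : Type*} [TopologicalSpace X] [MetricSpace Y] {f : X → Y} {K : Set X} {p : Y}

theorem exists_pos_forall_le_dist (hK : IsCompact K) (hf : ContinuousOn f K) (hp : p ∉ f '' K) :
    ∃ r > 0, ∀ x ∈ K, r ≤ dist (f x) p :=
  hK.exists_forall_le' (by fun_prop) fun x hx =>
    dist_pos.2 fun hxp => hp ⟨x, hx, hxp⟩

theorem mem_image_of_tendsto {ι : Type*} {l : Filter ι} [l.NeBot] {g : ι → X → Y} {p' : ι → Y}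
    (hK : IsCompact K) (hf : ContinuousOn f K) (hg : TendstoUniformlyOn g f l K)
    (hp : Tendsto p' l (𝓝 p)) (h : ∀ᶠ n in l, p' n ∈ g n '' K) : p ∈ f '' K := by
  by_contra hnot
  obtain ⟨r, hr, hfr⟩ := exists_pos_forall_le_dist hK hf hnot
  obtain ⟨n, ⟨x, hx, hxn⟩, hnp, hng⟩ := (h.and ((Metric.tendsto_nhds.1 hp (r / 2)
    (half_pos hr)).and (Metric.tendstoUniformlyOn_iff.1 hg (r / 2) (half_pos hr)))).exists
  have : dist (f x) p < r := calc
    dist (f x) p ≤ dist (f x) (g n x) + dist (p' n) p := hxn ▸ dist_triangle ..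
    _ < r / 2 + r / 2 := add_lt_add (hng x hx) hnp
    _ = r := add_halves r
  exact this.not_ge (hfr x hx)

end UniformLimit

section Simplex

open Set

section Support

variable {ι : Type*} [Fintype ι]

/-- The indices of the nonzero coordinates of `x`: on the simplex, the vertices of the smallest
face containing `x`. -/
def vertexSupport (x : ι → ℝ) : Finset ι :=
  Finset.univ.filter fun i => x i ≠ 0

theorem mem_vertexSupport {x : ι → ℝ} {i : ι} : i ∈ vertexSupport x ↔ x i ≠ 0 := by
  simp [vertexSupport]

theorem vertexSupport_subset_iff {x : ι → ℝ} {S : Finset ι} :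
    vertexSupport x ⊆ S ↔ ∀ i ∉ S, x i = 0 :=
  forall_congr' fun i => by rw [mem_vertexSupport, not_imp_comm]

variable (ι) in
/-- The vectors with at most `d` nonzero coordinates: the union of the `d`-dimensional coordinate
subspaces, which meets the simplex in its `(d - 1)`-skeleton. -/
def lowSupport (d : ℕ) : Set (ι → ℝ) :=
  {x | (vertexSupport x).card ≤ d}

theorem isClosed_lowSupport (d : ℕ) : IsClosed (lowSupport ι d) := by
  classical
  have : lowSupport ι d = ⋃ S ∈ {S : Finset ι | S.card ≤ d}, (Sᶜ : Set ι).pi fun _ => {0} := by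
    ext x
    simp only [lowSupport, mem_ofPred_eq, mem_iUnion, mem_pi, mem_compl_iff, Finset.mem_coe,
      mem_singleton_iff, ← vertexSupport_subset_iff, exists_prop]
    exact ⟨fun h => ⟨_, h, Finset.Subset.rfl⟩, fun ⟨S, hS, h⟩ => (Finset.card_le_card h).trans hS⟩
  rw [this]
  exact (toFinite _).isClosed_biUnion fun S _ => isClosed_set_pi fun _ _ => isClosed_singleton

end Support

variable {N : ℕ}

theorem convex_simpFace (S : Finset (Fin (N + 1))) : Convex ℝ (simpFace S) :=
  (convex_stdSimplex ℝ _).inter (convex_pi fun _ _ => convex_singleton 0)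

theorem isCompact_simpFace (S : Finset (Fin (N + 1))) : IsCompact (simpFace S) :=
  (isCompact_stdSimplex ℝ _).inter_right (isClosed_set_pi fun _ _ => isClosed_singleton)

theorem simpFace_nonempty {S : Finset (Fin (N + 1))} (hS : S.Nonempty) :
    (simpFace S).Nonempty := by
  obtain ⟨i, hi⟩ := hS
  exact ⟨Pi.single i 1, single_mem_stdSimplex ℝ i, fun j hj =>
    Pi.single_eq_of_ne (fun h : j = i => hj (h ▸ hi)) 1⟩

theorem simpFace_subset_stdSimp (S : Finset (Fin (N + 1))) : simpFace S ⊆ stdSimp N :=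
  fun _ hx => hx.1

theorem mem_simpFace_iff {S : Finset (Fin (N + 1))} {x : Fin (N + 1) → ℝ} :
    x ∈ simpFace S ↔ x ∈ stdSimp N ∧ vertexSupport x ⊆ S := by
  rw [vertexSupport_subset_iff]
  rfl

theorem isClosed_exists_mem_eq_zero {ι : Type*} (S : Finset ι) :
    IsClosed {x : ι → ℝ | ∃ i ∈ S, x i = 0} := by
  have : {x : ι → ℝ | ∃ i ∈ S, x i = 0} = ⋃ i ∈ S, {x | x i = 0} := by
    ext x; simp
  rw [this]
  exact S.finite_toSet.isClosed_biUnion fun i _ =>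
    isClosed_eq (continuous_apply i) continuous_const

theorem isCompact_simpFaceBoundary (S : Finset (Fin (N + 1))) :
    IsCompact (simpFaceBoundary S) :=
  (isCompact_simpFace S).inter_right (isClosed_exists_mem_eq_zero S)

theorem simpFaceBoundary_subset_simpFace (S : Finset (Fin (N + 1))) :
    simpFaceBoundary S ⊆ simpFace S :=
  fun _ hx => hx.1

theorem skel_eq_inter_lowSupport (N k : ℕ) :
    skel N k = stdSimp N ∩ lowSupport (Fin (N + 1)) (k + 1) := by
  ext x
  simp only [skel, lowSupport, mem_inter_iff, mem_ofPred_eq, ← ncard_coe_finset, vertexSupport,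
    Finset.coe_filter_univ]

theorem isClosed_skel (N k : ℕ) : IsClosed (skel N k) := by
  rw [skel_eq_inter_lowSupport]
  exact (isClosed_stdSimplex ℝ _).inter (isClosed_lowSupport _)

theorem card_vertexSupport_lt_of_mem {ι : Type*} [Fintype ι] {S : Finset ι} {x : ι → ℝ}
    (hxS : vertexSupport x ⊆ S) (hx : ∃ i ∈ S, x i = 0) : (vertexSupport x).card < S.card := by
  obtain ⟨i, hi, hxi⟩ := hx
  exact Finset.card_lt_card ⟨hxS, fun h => mem_vertexSupport.1 (h hi) hxi⟩

theorem simpFace_subset_inter_lowSupport {S : Finset (Fin (N + 1))} {d : ℕ} (hS : S.card ≤ d) :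
    simpFace S ⊆ stdSimp N ∩ lowSupport (Fin (N + 1)) d :=
  fun _ hx => ⟨hx.1, (Finset.card_le_card (mem_simpFace_iff.1 hx).2).trans hS⟩

theorem simpFaceBoundary_subset_inter_lowSupport {S : Finset (Fin (N + 1))} {d : ℕ}
    (hS : S.card ≤ d + 1) : simpFaceBoundary S ⊆ stdSimp N ∩ lowSupport (Fin (N + 1)) d :=
  fun _ hx => ⟨hx.1.1, Nat.le_of_lt_succ <|
    (card_vertexSupport_lt_of_mem (mem_simpFace_iff.1 hx.1).2 hx.2).trans_le hS⟩

end Simplex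

theorem exists_card_inter_le_of_card_lt {α V : Type*} [DecidableEq V] {P : Finset α}
    {s : α → Finset V} (hs : (P : Set α).PairwiseDisjoint s) {U : Finset V} {d : ℕ}
    (hU : U.card < P.card * (d + 1)) : ∃ i ∈ P, (s i ∩ U).card ≤ d := by
  by_contra! h
  have hsum : ∑ i ∈ P, (s i ∩ U).card ≤ U.card :=
    (Finset.card_biUnion (hs.mono fun i => Finset.inter_subset_left)).symm.trans_le
      (Finset.card_le_card (Finset.biUnion_subset.2 fun i _ => Finset.inter_subset_right))
  exact (hU.trans_le (P.card_nsmul_le_sum _ (d + 1) h)).not_ge hsum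

section Winding

open Set Filter
open scoped Topology

variable {N d : ℕ} {f : (Fin (N + 1) → ℝ) → Euc d} {S : Finset (Fin (N + 1))} {p : Euc d}

theorem not_inWne_of_extension {G : (Fin (N + 1) → ℝ) → Euc d} (hS : S.Nonempty)
    (hG : ContinuousOn G (simpFace S)) (hGf : EqOn G f (simpFaceBoundary S))
    (hp : ∀ x ∈ simpFace S, G x ≠ p) : ¬ InWne d f S p := by
  rw [InWne, not_or, not_not]
  have hsub := simpFaceBoundary_subset_simpFace S
  refine ⟨fun ⟨x, hx, hxp⟩ => hp x (hsub hx) ((hGf hx).trans hxp), ?_⟩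
  have := (convex_simpFace S).contractibleSpace (simpFace_nonempty hS)
  let G' : C(simpFace S, ({p}ᶜ : Set (Euc d))) :=
    ⟨fun x => ⟨G x, hp x x.2⟩, hG.domRestrict.subtype_mk _⟩
  let i : C(simpFaceBoundary S, simpFace S) := ⟨inclusion hsub, continuous_inclusion hsub⟩
  obtain ⟨y, hy⟩ := ((id_nullhomotopic (simpFace S)).comp_left i).comp_right G'
  exact ⟨_, y, fun x => hGf x.2, hy⟩

theorem exists_extension_of_not_inWne (h : ¬ InWne d f S p) :
    ∃ G : C(Fin (N + 1) → ℝ, Euc d), EqOn G f (simpFaceBoundary S) ∧ ∀ x, G x ≠ p := by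
  rw [InWne, not_or, not_not] at h
  obtain ⟨-, g, y, hgf, hg⟩ := h
  obtain ⟨G, hG⟩ := exists_extension_of_homotopic (isCompact_simpFaceBoundary S).isClosed
    isOpen_compl_singleton hg (G₁ := ContinuousMap.const _ y) rfl
  refine ⟨⟨fun x => G x, by fun_prop⟩, fun x hx => ?_, fun x => (G x).2⟩
  rw [← hgf ⟨x, hx⟩, ← hG]
  rfl

theorem IsWindingPartition.isTverbergPartition {q : ℕ} {P : Finset (Finset (Fin (N + 1)))}
    (h : IsWindingPartition d q f P) (hf : ContinuousOn f (stdSimp N)) :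
    IsTverbergPartition q f P := by
  obtain ⟨hq, hne, hcard, hdisj, p, hp⟩ := h
  refine ⟨hq, hne, hdisj, p, mem_iInter₂.2 fun S hS => ?_⟩
  rcases (hcard S hS).lt_or_eq with h | h
  · exact (hp S hS).1 (Nat.lt_succ_iff.1 h)
  · by_contra hpS
    exact not_inWne_of_extension (hne S hS) (hf.mono (simpFace_subset_stdSimp S))
      (eqOn_refl _ _) (fun x hx hxp => hpS ⟨x, hx, hxp⟩) ((hp S hS).2 h)

section Limit

variable {ι : Type*} {l : Filter ι} {g : ι → (Fin (N + 1) → ℝ) → Euc d} {p' : ι → Euc d}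

theorem inWne_of_tendsto [l.NeBot] (hS : S.Nonempty)
    (hgc : ∀ n, ContinuousOn (g n) (simpFaceBoundary S))
    (hg : TendstoUniformlyOn g f l (simpFaceBoundary S)) (hp : Tendsto p' l (𝓝 p))
    (h : ∀ᶠ n in l, InWne d (g n) S (p' n)) : InWne d f S p := by
  by_contra hnot
  obtain ⟨G, hGf, hGp⟩ := exists_extension_of_not_inWne hnot
  obtain ⟨r, hr, hGr⟩ : ∃ r > 0, ∀ x ∈ simpFace S, r ≤ dist (G x) p :=
    exists_pos_forall_le_dist (isCompact_simpFace S) G.continuous.continuousOn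
      fun ⟨x, _, hx⟩ => hGp x hx
  obtain ⟨n, hnW, hnp, hng⟩ := (h.and ((Metric.tendsto_nhds.1 hp (r / 2) (half_pos hr)).and
    (Metric.tendstoUniformlyOn_iff.1 hg (r / 2) (half_pos hr)))).exists
  -- The defect of `G` as an extension of `g n` is small, and so is its Tietze extension `D`.
  obtain ⟨D, hD, hDr⟩ := exists_continuousMap_eqOn_norm_le (f := fun x => g n x - G x)
    (isCompact_simpFaceBoundary S).isClosed ((hgc n).sub G.continuous.continuousOn) (half_pos hr)
    fun x hx => by rw [hGf hx, ← dist_eq_norm, dist_comm]; exact (hng x hx).le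
  refine not_inWne_of_extension hS (G + D).continuous.continuousOn (fun x hx => ?_)
    (fun x hx hxp => ?_) hnW
  · simp [hD hx]
  · have : dist (G x) p < r := calc
      dist (G x) p ≤ dist (G x) (p' n) + dist (p' n) p := dist_triangle ..
      _ = ‖D x‖ + dist (p' n) p := by
        rw [← hxp, dist_eq_norm]; simp
      _ < r / 2 + r / 2 := add_lt_add_of_le_of_lt (hDr x) hnp
      _ = r := add_halves r
    exact this.not_ge (hGr x hx)

theorem exists_isWindingPartition_of_tendstoUniformlyOn [l.NeBot] {q : ℕ}
    (hN : N + 1 < q * (d + 1))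
    (hgc : ∀ n, ContinuousOn (g n) (stdSimp N ∩ lowSupport (Fin (N + 1)) d))
    (hg : TendstoUniformlyOn g f l (stdSimp N ∩ lowSupport (Fin (N + 1)) d))
    (h : ∀ n, ∃ P, IsWindingPartition d q (g n) P) : ∃ P, IsWindingPartition d q f P := by
  obtain ⟨P, hP⟩ : ∃ P, ∃ᶠ n in l, IsWindingPartition d q (g n) P := by
    by_contra! hnot
    obtain ⟨n, hn⟩ := (eventually_all.2 hnot).exists
    exact (h n).elim hn
  obtain ⟨-, hq, hne, hcard, hdisj, -⟩ := hP.exists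
  obtain ⟨S₀, hS₀, hS₀d⟩ := exists_card_inter_le_of_card_lt (U := Finset.univ) (d := d)
    (s := id) hdisj (by simpa [hq] using hN)
  rw [Finset.inter_univ, id] at hS₀d
  have : (l ⊓ 𝓟 {n | IsWindingPartition d q (g n) P}).NeBot := frequently_mem_iff_neBot.1 hP
  let U : Ultrafilter ι := .of (l ⊓ 𝓟 {n | IsWindingPartition d q (g n) P})
  have hUl : (U : Filter ι) ≤ l := (Ultrafilter.of_le _).trans inf_le_left
  have hUP : ∀ᶠ n in U, IsWindingPartition d q (g n) P :=
    Ultrafilter.of_le _ (mem_inf_of_right (mem_principal_self _))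
  obtain ⟨p', hp'⟩ := (hUP.mono fun n hn => hn.2.2.2.2).choice
  obtain ⟨x, hx⟩ := (hp'.mono fun n hn => (hn S₀ hS₀).1 hS₀d).choice
  have hgU : TendstoUniformlyOn g f U (stdSimp N ∩ lowSupport _ d) := fun u hu => hUl (hg u hu)
  have hf : ContinuousOn f (stdSimp N ∩ lowSupport _ d) := hg.continuousOn (.of_forall hgc)
  obtain ⟨x₀, hx₀, hxx₀⟩ := (isCompact_simpFace S₀).ultrafilter_le_nhds (U.map x)
    (le_principal_iff.2 (hx.mono fun n hn => hn.1))
  have hface := simpFace_subset_inter_lowSupport hS₀d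
  have hp : Tendsto p' U (𝓝 (f x₀)) :=
    ((hgU.mono hface).tendsto_comp ((hf.mono hface) x₀ hx₀) (tendsto_nhdsWithin_iff.2
      ⟨hxx₀, hx.mono fun n hn => hn.1⟩)).congr' (hx.mono fun n hn => hn.2)
  refine ⟨P, hq, hne, hcard, hdisj, f x₀, fun S hS => ⟨fun hSd => ?_, fun hSd => ?_⟩⟩
  · have hface := simpFace_subset_inter_lowSupport hSd
    exact mem_image_of_tendsto (isCompact_simpFace S) (hf.mono hface) (hgU.mono hface) hp
      (hp'.mono fun n hn => (hn S hS).1 hSd)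
  · have hbdry : simpFaceBoundary S ⊆ stdSimp N ∩ lowSupport _ d :=
      simpFaceBoundary_subset_inter_lowSupport hSd.le
    exact inWne_of_tendsto (hne S hS) (fun n => (hgc n).mono hbdry) (hgU.mono hbdry) hp
      (hp'.mono fun n hn => (hn S hS).2 hSd)

end Limit

end Winding

section Sard

open Set MeasureTheory Module

variable {M A : Type*} [NormedAddCommGroup M] [NormedSpace ℝ M] [FiniteDimensional ℝ M]
  [NormedAddCommGroup A] [NormedSpace ℝ A] {Φ : M → A}

theorem ae_bijective_fderiv [FiniteDimensional ℝ A] [MeasurableSpace A] [BorelSpace A]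
    (μ : Measure A) [μ.IsAddHaarMeasure] (hΦ : Differentiable ℝ Φ)
    (hdim : finrank ℝ M ≤ finrank ℝ A) :
    ∀ᵐ a ∂μ, ∀ m, Φ m = a → Function.Bijective (fderiv ℝ Φ m) := by
  obtain ⟨j, hj⟩ := finrank_le_iff_exists_linearMap.1 hdim
  obtain ⟨π₀, hπ₀⟩ := j.exists_leftInverse_of_injective (LinearMap.ker_eq_bot.2 hj)
  let π : A →L[ℝ] M := π₀.toContinuousLinearMap
  have hπ : Function.Surjective π := fun m => ⟨j m, LinearMap.congr_fun hπ₀ m⟩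
  have hΦπ (x : A) : HasFDerivAt (Φ ∘ π) ((fderiv ℝ Φ (π x)).comp π) x :=
    (hΦ (π x)).hasFDerivAt.comp x π.hasFDerivAt
  have hnull : μ (Φ ∘ π '' {x | ((fderiv ℝ Φ (π x)).comp π).det = 0}) = 0 :=
    addHaar_image_eq_zero_of_det_fderivWithin_eq_zero μ
      (fun x _ => (hΦπ x).hasFDerivWithinAt) fun x hx => hx
  filter_upwards [measure_eq_zero_iff_ae_notMem.1 hnull] with a ha m hm
  obtain ⟨x, rfl⟩ := hπ m
  have hunit : IsUnit ((fderiv ℝ Φ (π x)).comp π : A →ₗ[ℝ] A) :=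
    (LinearMap.isUnit_iff_isUnit_det _).2 (isUnit_iff_ne_zero.2 fun h => ha ⟨x, h, hm⟩)
  obtain ⟨hinj, hsurj⟩ : Function.Bijective (fderiv ℝ Φ (π x) ∘ π) :=
    (Module.End.isUnit_iff _).1 hunit
  exact ⟨hinj.of_comp_right hπ, hsurj.of_comp⟩

theorem finite_inter_preimage_of_injective_fderiv (hΦ : Differentiable ℝ Φ) {K : Set M}
    (hK : IsCompact K) {a : A} (ha : ∀ m, Φ m = a → Function.Injective (fderiv ℝ Φ m)) :
    (K ∩ Φ ⁻¹' {a}).Finite := by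
  by_contra hinf
  obtain ⟨m, -, hacc⟩ := Set.Infinite.exists_accPt_of_subset_isCompact hinf hK inter_subset_left
  have hcl : IsClosed (Φ ⁻¹' {a}) := isClosed_singleton.preimage hΦ.continuous
  have hma : Φ m = a := hcl.closure_subset_iff.2 inter_subset_right
    (accPt_iff_clusterPt.1 hacc |>.mono inf_le_right |>.mem_closure)
  obtain ⟨C, -, hC⟩ := (fderiv ℝ Φ m : M →ₗ[ℝ] A).exists_antilipschitzWith
    (LinearMap.ker_eq_bot.2 (ha m hma))
  obtain ⟨z, hz, hza⟩ := ((accPt_iff_frequently_nhdsNE.1 hacc).and_eventually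
    ((hΦ m).hasFDerivAt.eventually_ne ⟨C, hC⟩ (c := a))).exists
  exact hza hz.2

end Sard

section GeneralPosition

open Set MeasureTheory Module

variable {J E : Type*} [Finite J] [NormedAddCommGroup E] [NormedSpace ℝ E]
  {B : Finset J} {M : B → Type*} [∀ j, NormedAddCommGroup (M j)] [∀ j, NormedSpace ℝ (M j)]

open Classical in
/-- The map whose fibre over `c` records the coincidences `G j (x j, c) + c j = p` for all `j ∈ B`,
where `G j` involves only the parameters `c i` with `i ∉ B`. -/
def coincidenceMap (G : ∀ j : B, M j × ({i // i ∉ B} → E) → E)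
    (z : (∀ j, M j) × ({i // i ∉ B} → E) × E) (j : J) : E :=
  if hj : j ∈ B then z.2.2 - G ⟨j, hj⟩ (z.1 ⟨j, hj⟩, z.2.1) else z.2.1 ⟨j, hj⟩

theorem differentiable_coincidenceMap {G : ∀ j : B, M j × ({i // i ∉ B} → E) → E}
    (hG : ∀ j, Differentiable ℝ (G j)) : Differentiable ℝ (coincidenceMap G) := by
  classical
  have := Fintype.ofFinite J
  refine differentiable_pi.2 fun j => ?_
  by_cases hj : j ∈ B
  · simp only [coincidenceMap, hj, dif_pos]
    fun_prop
  · simp only [coincidenceMap, hj, dif_neg, not_false_eq_true]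
    fun_prop

variable [FiniteDimensional ℝ E] [∀ j, FiniteDimensional ℝ (M j)]

theorem finrank_add_card_mul_eq :
    finrank ℝ ((∀ j, M j) × ({i // i ∉ B} → E) × E) + B.card * finrank ℝ E =
      ∑ j, finrank ℝ (M j) + finrank ℝ E + finrank ℝ (J → E) := by
  classical
  have := Fintype.ofFinite J
  have hcard : Fintype.card {i // i ∉ B} + B.card = Fintype.card J := by
    rw [Fintype.card_subtype_compl, Fintype.card_coe]
    exact Nat.sub_add_cancel B.card_le_univ
  simp only [finrank_prod, finrank_pi_fintype, Finset.sum_const, Finset.card_univ, smul_eq_mul,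
    ← hcard]
  ring

theorem ae_finite_coincidences [MeasurableSpace (J → E)] [BorelSpace (J → E)]
    (μ : Measure (J → E)) [μ.IsAddHaarMeasure] (hB : B.Nonempty)
    {G : ∀ j : B, M j × ({i // i ∉ B} → E) → E} (hG : ∀ j, Differentiable ℝ (G j))
    {K : ∀ j, Set (M j)} (hK : ∀ j, IsCompact (K j))
    (hdim : ∑ j, finrank ℝ (M j) + finrank ℝ E ≤ B.card * finrank ℝ E) :
    ∀ᵐ c ∂μ, let Q := {p | ∀ j : B, ∃ x ∈ K j, G j (x, fun i => c i) + c j = p}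
      Q.Finite ∧ (Q.Nonempty → ∑ j, finrank ℝ (M j) + finrank ℝ E = B.card * finrank ℝ E) := by
  classical
  have := Fintype.ofFinite J
  have hrank := finrank_add_card_mul_eq (B := B) (M := M) (E := E)
  have hΦ := differentiable_coincidenceMap hG
  filter_upwards [ae_bijective_fderiv
    (M := (∀ j, M j) × ({i // i ∉ B} → E) × E) μ hΦ (by lia)] with c hc Q
  have hmem {x : ∀ j, M j} {p : E} (h : ∀ j : B, G j (x j, fun i => c i) + c j = p) :
      coincidenceMap G (x, fun i => c i, p) = c := by
    funext j
    by_cases hj : j ∈ B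
    · simp [coincidenceMap, hj, ← h ⟨j, hj⟩]
    · simp [coincidenceMap, hj]
  constructor
  · obtain ⟨j₀, hj₀⟩ := hB
    let c' (i : {i // i ∉ B}) : E := c i
    have hGc (j : B) : Continuous fun x => G j (x, c') + c j :=
      ((hG j).continuous.comp (.prodMk_left c')).add continuous_const
    have hK' : IsCompact (univ.pi K ×ˢ {c'} ×ˢ
        ((fun x => G ⟨j₀, hj₀⟩ (x, c') + c j₀) '' K ⟨j₀, hj₀⟩)) :=
      (isCompact_univ_pi hK).prod (isCompact_singleton.prod ((hK _).image (hGc _)))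
    refine ((finite_inter_preimage_of_injective_fderiv hΦ hK' fun m hm =>
      (hc m hm).1).image fun z => z.2.2).subset fun p hp => ?_
    choose x hxK hx using hp
    exact ⟨(x, c', p), ⟨⟨fun j _ => hxK j, rfl, _, hxK _, hx _⟩, hmem hx⟩, rfl⟩
  · rintro ⟨p, hp⟩
    choose x _ hx using hp
    have := (LinearEquiv.ofBijective _ (hc _ (hmem hx))).finrank_eq
    lia

end GeneralPosition

section Genericity

open Set MeasureTheory Module

variable {N d : ℕ}

/-- A nonempty family of pairwise disjoint vertex sets such that the images of the corresponding
faces in `ℝ^d` have an intersection of nonpositive expected dimension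
`∑ (|S| - 1) - (|B| - 1) * d`. -/
structure HasNonposExpectedDim {V : Type*} (d : ℕ) (B : Finset (Finset V)) : Prop where
  nonempty : B.Nonempty
  pairwiseDisjoint : (B : Set (Finset V)).PairwiseDisjoint id
  sum_card_add_le : ∑ S ∈ B, S.card + d ≤ (d + 1) * B.card

/-- A map is generic if the images of pairwise disjoint faces have a finite intersection when its
expected dimension is `0`, and an empty one when its expected dimension is negative. -/
def IsGeneric (g : (Fin (N + 1) → ℝ) → Euc d) : Prop :=
  ∀ B : Finset (Finset (Fin (N + 1))), HasNonposExpectedDim d B →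
    (⋂ S ∈ B, g '' simpFace S).Finite ∧
      ((⋂ S ∈ B, g '' simpFace S).Nonempty → ∑ S ∈ B, S.card + d = (d + 1) * B.card)

section Chart

variable {ι : Type*} [Finite ι] [DecidableEq ι]

/-- The affine parametrization of the hyperplane `∑ x = 1` in the coordinate subspace of
`insert r T`, by the coordinates in `T`. -/
def faceChart (r : ι) (T : Finset ι) (u : T → ℝ) : ι → ℝ :=
  Pi.single r 1 + ∑ v, u v • (Pi.single v.1 1 - Pi.single r 1)

theorem differentiable_faceChart (r : ι) (T : Finset ι) : Differentiable ℝ (faceChart r T) := by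
  have := Fintype.ofFinite ι
  unfold faceChart
  fun_prop

theorem faceChart_erase_eq {r : ι} {S : Finset ι} (hr : r ∈ S) {x : ι → ℝ}
    (hx : ∑ i ∈ S, x i = 1) (hxS : ∀ i ∉ S, x i = 0) :
    faceChart r (S.erase r) (fun v => x v) = x := by
  have := Fintype.ofFinite ι
  have hsum : ∑ v ∈ S.erase r, x v = 1 - x r := by
    rw [← hx, ← Finset.sum_erase_add _ _ hr, add_sub_cancel_right]
  have hbasis : ∑ v ∈ S.erase r, x v • Pi.single v 1 + x r • Pi.single r 1 = x := by
    rw [Finset.sum_erase_add _ _ hr,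
      Finset.sum_subset S.subset_univ fun i _ hi => by rw [hxS i hi, zero_smul]]
    exact (pi_eq_sum_univ' x).symm
  calc faceChart r (S.erase r) (fun v => x v)
      = Pi.single r 1 + ∑ v ∈ S.erase r, x v • (Pi.single v 1 - Pi.single r 1) :=
        congrArg (Pi.single r 1 + ·) (Finset.sum_coe_sort (S.erase r) fun v =>
          x v • (Pi.single v 1 - Pi.single r 1 : ι → ℝ))
    _ = ∑ v ∈ S.erase r, x v • Pi.single v 1 + x r • Pi.single r 1 := by
        simp only [smul_sub, Finset.sum_sub_distrib, ← Finset.sum_smul, hsum]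
        module
    _ = x := hbasis

end Chart

theorem sum_eq_one_of_mem_simpFace {S : Finset (Fin (N + 1))} {x : Fin (N + 1) → ℝ}
    (hx : x ∈ simpFace S) : ∑ i ∈ S, x i = 1 :=
  (Finset.sum_subset S.subset_univ fun i _ hi => hx.2 i hi).trans hx.1.2

/-- The perturbation of `g` that moves the face `σ_S` rigidly by `c S`, and any face disjoint from
it not at all. -/
def facePerturbation (g : (Fin (N + 1) → ℝ) → Euc d) (c : Finset (Fin (N + 1)) → Euc d)
    (x : Fin (N + 1) → ℝ) : Euc d :=
  g x + ∑ S, (∑ v ∈ S, x v) • c S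

theorem facePerturbation_of_mem_simpFace {g : (Fin (N + 1) → ℝ) → Euc d}
    {c : Finset (Fin (N + 1)) → Euc d} {B : Finset (Finset (Fin (N + 1)))}
    (hB : (B : Set (Finset (Fin (N + 1)))).PairwiseDisjoint id) {T : Finset (Fin (N + 1))}
    (hT : T ∈ B) {x : Fin (N + 1) → ℝ} (hx : x ∈ simpFace T) :
    facePerturbation g c x = g x + ∑ S : {S // S ∉ B}, (∑ v ∈ S.1, x v) • c S + c T := by
  have hcT : ∑ S : {S // S ∈ B}, (∑ v ∈ S.1, x v) • c S = c T := by
    rw [Finset.sum_coe_sort B fun S => (∑ v ∈ S, x v) • c S, Finset.sum_eq_single_of_mem T hT,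
      sum_eq_one_of_mem_simpFace hx, one_smul]
    intro S hS hST
    have hdisj : Disjoint S T := hB hS hT hST
    rw [Finset.sum_eq_zero fun v hv => hx.2 v (Finset.disjoint_left.1 hdisj hv), zero_smul]
  have hsplit := Fintype.sum_subtype_add_sum_subtype (· ∈ B) fun S => (∑ v ∈ S, x v) • c S
  rw [facePerturbation, ← hsplit, add_assoc, add_comm _ (c T)]
  congr 2
  convert hcT

theorem ae_finite_iInter_facePerturbation {g : (Fin (N + 1) → ℝ) → Euc d}
    (hg : Differentiable ℝ g)
    {B : Finset (Finset (Fin (N + 1)))} (hB : HasNonposExpectedDim d B)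
    (hneB : ∀ S ∈ B, S.Nonempty) :
    ∀ᵐ c, (⋂ S ∈ B, facePerturbation g c '' simpFace S).Finite ∧
      ((⋂ S ∈ B, facePerturbation g c '' simpFace S).Nonempty →
        ∑ S ∈ B, S.card + d = (d + 1) * B.card) := by
  choose! r hr using hneB
  have hcard : ∑ S : B, finrank ℝ (S.1.erase (r S) → ℝ) + B.card = ∑ S ∈ B, S.card := by
    rw [Finset.card_eq_sum_ones, ← Finset.sum_coe_sort B, ← Finset.sum_coe_sort B,
      ← Finset.sum_add_distrib]
    refine Finset.sum_congr rfl fun S _ => ?_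
    rw [finrank_pi, Fintype.card_coe, Finset.card_erase_add_one (hr S S.2)]
  have hrank : finrank ℝ (Euc d) = d := finrank_euclideanSpace_fin
  have hG (S : B) : Differentiable ℝ fun z : (S.1.erase (r S) → ℝ) × ({i // i ∉ B} → Euc d) =>
      g (faceChart (r S) _ z.1) + ∑ T, (∑ v ∈ T.1, faceChart (r S) _ z.1 v) • z.2 T := by
    have := differentiable_faceChart (r S) (S.1.erase (r S))
    fun_prop
  have hdim := hB.sum_card_add_le
  filter_upwards [ae_finite_coincidences volume hB.nonempty hG
    (fun S => isCompact_Icc (a := 0) (b := 1)) (by rw [hrank]; lia)] with c ⟨hfin, hdimc⟩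
  have hsub : ⋂ S ∈ B, facePerturbation g c '' simpFace S ⊆ {p | ∀ S : B,
      ∃ x ∈ Icc 0 1, g (faceChart (r S) (S.1.erase (r S)) x) + ∑ T : {T // T ∉ B},
        (∑ v ∈ T.1, faceChart (r S) _ x v) • c T + c S = p} := by
    intro p hp S
    obtain ⟨x, hx, hxp⟩ := mem_iInter₂.1 hp S S.2
    have hxI := stdSimplex_subset_Icc _ hx.1
    refine ⟨fun v => x v, ⟨fun v => hxI.1 v, fun v => hxI.2 v⟩, ?_⟩
    rw [faceChart_erase_eq (hr S S.2) (sum_eq_one_of_mem_simpFace hx) hx.2,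
      ← facePerturbation_of_mem_simpFace hB.pairwiseDisjoint S.2 hx, hxp]
  refine ⟨hfin.subset hsub, fun h => ?_⟩
  have := hdimc (h.mono hsub)
  rw [hrank] at this
  lia

theorem ae_isGeneric_facePerturbation {g : (Fin (N + 1) → ℝ) → Euc d} (hg : Differentiable ℝ g) :
    ∀ᵐ c, IsGeneric (facePerturbation g c) := by
  simp only [IsGeneric, ae_all_iff, Filter.eventually_imp_distrib_left]
  intro B hB
  by_cases hneB : ∀ S ∈ B, S.Nonempty
  · exact ae_finite_iInter_facePerturbation hg hB hneB
  · have hempty : (∅ : Finset (Fin (N + 1))) ∈ B := by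
      push Not at hneB
      obtain ⟨S, hS, rfl⟩ := hneB
      exact hS
    have hface : simpFace (∅ : Finset (Fin (N + 1))) = ∅ :=
      eq_empty_of_forall_notMem fun x hx => by simpa using sum_eq_one_of_mem_simpFace hx
    refine .of_forall fun c => ?_
    have : ⋂ S ∈ B, facePerturbation g c '' simpFace S = ∅ :=
      subset_eq_empty (biInter_subset_of_mem hempty) (by rw [hface, image_empty])
    simp [this]

theorem dist_facePerturbation_le (g : (Fin (N + 1) → ℝ) → Euc d)
    (c : Finset (Fin (N + 1)) → Euc d) {x : Fin (N + 1) → ℝ} (hx : x ∈ stdSimp N) :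
    dist (facePerturbation g c x) (g x) ≤ ∑ S, ‖c S‖ := by
  rw [facePerturbation, dist_self_add_left]
  refine (norm_sum_le _ _).trans (Finset.sum_le_sum fun S _ => ?_)
  have hS : ∑ v ∈ S, x v ≤ 1 :=
    (Finset.sum_le_univ_sum_of_nonneg hx.1).trans_eq hx.2
  rw [norm_smul, Real.norm_of_nonneg (Finset.sum_nonneg fun v _ => hx.1 v)]
  exact mul_le_of_le_one_left (norm_nonneg _) hS

theorem exists_isGeneric_dist_lt {f : (Fin (N + 1) → ℝ) → Euc d} (hf : Continuous f) {ε : ℝ}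
    (hε : 0 < ε) :
    ∃ g, Continuous g ∧ IsGeneric g ∧ ∀ x ∈ stdSimp N, dist (f x) (g x) < ε := by
  obtain ⟨h, hh, hfh, -⟩ := hf.exists_contDiff_approx 1 (ε := fun _ => ε / 2) continuous_const
    fun _ => half_pos hε
  have hopen : IsOpen {c : Finset (Fin (N + 1)) → Euc d | ∑ S, ‖c S‖ < ε / 2} :=
    isOpen_lt (by fun_prop) continuous_const
  obtain ⟨c, hc, hcg⟩ := (Measure.dense_of_ae
    (ae_isGeneric_facePerturbation (hh.differentiable one_ne_zero))).exists_mem_open hopen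
    ⟨0, by simpa using hε⟩
  refine ⟨_, ?_, hc, fun x hx => ?_⟩
  · have := hh.continuous
    unfold facePerturbation
    fun_prop
  · calc dist (f x) (facePerturbation h c x)
        ≤ dist (h x) (f x) + dist (facePerturbation h c x) (h x) := dist_comm (h x) (f x) ▸
          dist_triangle_right _ _ _
      _ < ε / 2 + ε / 2 := add_lt_add (hfh x) ((dist_facePerturbation_le h c hx).trans_lt hcg)
      _ = ε := add_halves ε

theorem exists_seq_isGeneric_tendstoUniformlyOn {f : (Fin (N + 1) → ℝ) → Euc d}
    (hf : Continuous f) :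
    ∃ g : ℕ → (Fin (N + 1) → ℝ) → Euc d, (∀ n, Continuous (g n)) ∧ (∀ n, IsGeneric (g n)) ∧
      TendstoUniformlyOn g f Filter.atTop (stdSimp N) := by
  choose g hgc hg hfg using fun n : ℕ =>
    exists_isGeneric_dist_lt hf (Nat.one_div_pos_of_nat (α := ℝ) (n := n))
  refine ⟨g, hgc, hg, Metric.tendstoUniformlyOn_iff.2 fun ε hε => ?_⟩
  filter_upwards [tendsto_one_div_add_atTop_nhds_zero_nat.eventually_lt_const hε] with n hn x hx
  exact (hfg n x hx).trans hn

end Genericity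

section Avoidance

open Set
open scoped unitInterval

theorem exists_continuousMap_interpolation {ι X E : Type*} [TopologicalSpace X]
    [NormedAddCommGroup E] [NormedSpace ℝ E] {Q : Set ι} (hQ : Q.Finite) {l : ι → ℝ}
    (hl : InjOn l Q) (g : C(X, E)) (G : ι → C(X, E)) :
    ∃ Γ : C(ℝ × X, E), (∀ p ∈ Q, ∀ x, Γ (l p, x) = G p x) ∧
      ∀ x, (∀ p, G p x = g x) → ∀ t, Γ (t, x) = g x := by
  classical
  have hlQ : InjOn l hQ.toFinset := by rwa [hQ.coe_toFinset]
  let θ (p : ι) : Polynomial ℝ := Lagrange.basis hQ.toFinset l p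
  refine ⟨⟨fun m => g m.2 + ∑ p ∈ hQ.toFinset, (θ p).eval m.1 • (G p m.2 - g m.2), by fun_prop⟩,
    fun p hp x => ?_, fun x hx t => ?_⟩
  · have hpQ := hQ.mem_toFinset.2 hp
    have hne : ∀ p' ∈ hQ.toFinset, p' ≠ p → (θ p').eval (l p) • (G p' x - g x) = 0 :=
      fun p' _ hne => by rw [Lagrange.eval_basis_of_ne hne hpQ, zero_smul]
    simp only [ContinuousMap.coe_mk, Finset.sum_eq_single_of_mem p hpQ hne,
      θ, Lagrange.eval_basis_self hlQ hpQ, one_smul, add_sub_cancel]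
  · simp only [ContinuousMap.coe_mk, hx, sub_self, smul_zero, Finset.sum_const_zero, add_zero]

theorem exists_mem_eq_zero_of_not_subset {ι : Type*} [Fintype ι] {T : Finset ι} {x : ι → ℝ}
    (h : ¬ T ⊆ vertexSupport x) : ∃ i ∈ T, x i = 0 := by
  obtain ⟨i, hi, hix⟩ := Finset.not_subset.1 h
  exact ⟨i, hi, by rwa [mem_vertexSupport, not_not] at hix⟩

variable {N d : ℕ} {g : C(Fin (N + 1) → ℝ, Euc d)}

theorem exists_eqOn_forall_mem_simpFace_ne {T : Finset (Fin (N + 1))} {p : Euc d}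
    (h : ¬ InWne d g T p) :
    ∃ G : C(Fin (N + 1) → ℝ, Euc d), (∀ x, ¬ T ⊆ vertexSupport x → G x = g x) ∧
      ∀ x ∈ simpFace T, G x ≠ p := by
  obtain ⟨G₀, hG₀, hG₀p⟩ := exists_extension_of_not_inWne h
  obtain ⟨G, hGT, hG⟩ := exists_continuousMap_eqOn_union (isCompact_simpFace T).isClosed
    (isClosed_exists_mem_eq_zero T) G₀.continuous.continuousOn g.continuous.continuousOn hG₀
  exact ⟨G, fun x hx => hG (exists_mem_eq_zero_of_not_subset hx),
    fun x hx => (hGT hx).trans_ne (hG₀p x)⟩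

theorem exists_eqOn_lowSupport_forall_ne (g : C(Fin (N + 1) → ℝ, Euc d)) (p : Euc d) :
    ∃ G : C(Fin (N + 1) → ℝ, Euc d), EqOn G g (lowSupport _ d) ∧
      ∀ T : Finset (Fin (N + 1)), T.card = d + 1 → ¬ InWne d g T p → ∀ x ∈ simpFace T, G x ≠ p := by
  have hcorr (T : Finset (Fin (N + 1))) : ∃ G : C(Fin (N + 1) → ℝ, Euc d),
      (∀ x, ¬ T ⊆ vertexSupport x → G x = g x) ∧ (¬ InWne d g T p → ∀ x ∈ simpFace T, G x ≠ p) := by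
    by_cases h : InWne d g T p
    · exact ⟨g, fun _ _ => rfl, fun h' => absurd h h'⟩
    · exact (exists_eqOn_forall_mem_simpFace_ne h).imp fun G hG => ⟨hG.1, fun _ => hG.2⟩
  choose G hG hGp using hcorr
  let 𝒯 : Finset (Finset (Fin (N + 1))) := Finset.powersetCard (d + 1) Finset.univ
  have hcard {T : Finset (Fin (N + 1))} : T ∈ 𝒯 ↔ T.card = d + 1 := by
    simp [𝒯, Finset.mem_powersetCard]
  refine ⟨⟨fun x => g x + ∑ T ∈ 𝒯, (G T x - g x), by fun_prop⟩, fun x hx => ?_,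
    fun T hT hTp x hx => ?_⟩
  · refine (congrArg (g x + ·) (Finset.sum_eq_zero fun T hT => ?_)).trans (add_zero _)
    exact sub_eq_zero.2 (hG T x fun h => (hx.trans_lt (Nat.lt_succ_self d)).not_ge
      ((hcard.1 hT).symm.trans_le (Finset.card_le_card h)))
  · have hother : ∀ T' ∈ 𝒯, T' ≠ T → G T' x - g x = 0 := fun T' hT' hne =>
      sub_eq_zero.2 (hG T' x fun h => hne (Finset.eq_of_subset_of_card_le
        (h.trans (mem_simpFace_iff.1 hx).2) (by rw [hT, hcard.1 hT'])))
    simpa only [ContinuousMap.coe_mk, Finset.sum_eq_single_of_mem T (hcard.2 hT) hother,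
      add_sub_cancel] using hGp T hTp x hx

theorem exists_family_forall_ne (g : C(Fin (N + 1) → ℝ, Euc d)) {Q : Set (Euc d)}
    (hQ : Q.Finite) {l : Euc d → I} (hl : InjOn l Q) :
    ∃ Γ : C(I × (Fin (N + 1) → ℝ), Euc d), (∀ t, ∀ x ∈ lowSupport _ d, Γ (t, x) = g x) ∧
      ∀ p ∈ Q, ∀ T : Finset (Fin (N + 1)), T.card = d + 1 → ¬ InWne d g T p →
        ∀ x ∈ simpFace T, Γ (l p, x) ≠ p := by
  choose G hGlow hGp using exists_eqOn_lowSupport_forall_ne g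
  obtain ⟨Γ, hΓ, hΓg⟩ := exists_continuousMap_interpolation (l := fun p => (l p : ℝ)) hQ
    (Subtype.val_injective.comp_injOn hl) g G
  refine ⟨⟨fun m => Γ (m.1, m.2), by fun_prop⟩, fun t x hx => hΓg x (fun p => hGlow p hx) t,
    fun p hp T hT hTp x hx => ?_⟩
  exact (hΓ p hp x).trans_ne (hGp p T hT hTp x hx)

end Avoidance

section Lift

open Set
open scoped unitInterval

theorem continuous_uncurry_comp {K X Y Z : Type*} [TopologicalSpace K] [CompactSpace K]
    [TopologicalSpace X] [TopologicalSpace Y] [TopologicalSpace Z] {F : K × Y → Z}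
    (hF : Continuous F) {u : X → K} {y : X → Y} (hy : Continuous y)
    (hu : ∀ x, ContinuousAt u x ∨ ∃ z, ∀ t, F (t, y x) = z) :
    Continuous fun x => F (u x, y x) := by
  refine continuous_iff_continuousAt.2 fun x => ?_
  rcases hu x with hux | ⟨z, hz⟩
  · exact hF.continuousAt.comp (f := fun x => (u x, y x)) (hux.prodMk hy.continuousAt)
  · rw [ContinuousAt, hz, Filter.tendsto_def]
    intro V hV
    have hFy : Continuous fun m : X × K => F (m.2, y m.1) := by fun_prop
    have htube : ∀ᶠ x' in nhds x, ∀ t ∈ univ, F (t, y x') ∈ V :=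
      isCompact_univ.eventually_forall_of_forall_eventually fun t _ =>
        hFy.continuousAt.eventually_mem (by simpa [hz] using hV)
    filter_upwards [htube] with x' hx' using hx' _ (mem_univ _)

section Coordinates

variable {ι : Type*} [Fintype ι] {x : ι → ℝ} {d : ℕ}

/-- The missing mass of a point: for a point of a larger simplex restricted to the vertices `ι`,
this is the mass at the other vertices. -/
def slack (x : ι → ℝ) : ℝ :=
  1 - ∑ i, x i

/-- The distance to the vectors with at most `d` nonzero coordinates. -/
def depth (d : ℕ) (x : ι → ℝ) : ℝ :=
  Metric.infDist x (lowSupport ι d)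

/-- The radial projection to the simplex, modified near the origin to be continuous: it normalizes
the mass of points of mass at least `1 / 2`. -/
def radial (x : ι → ℝ) : ι → ℝ :=
  (max (∑ i, x i) (1 / 2))⁻¹ • x

theorem zero_mem_lowSupport : (0 : ι → ℝ) ∈ lowSupport ι d := by
  simp [lowSupport, vertexSupport]

theorem depth_nonneg : 0 ≤ depth d x :=
  Metric.infDist_nonneg

theorem depth_eq_zero (hx : x ∈ lowSupport ι d) : depth d x = 0 :=
  Metric.infDist_zero_of_mem hx

theorem depth_pos (hx : x ∉ lowSupport ι d) : 0 < depth d x :=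
  ((isClosed_lowSupport d).notMem_iff_infDist_pos ⟨0, zero_mem_lowSupport⟩).1 hx

theorem depth_le_sum (hx : ∀ i, 0 ≤ x i) : depth d x ≤ ∑ i, x i := by
  refine (Metric.infDist_le_dist_of_mem zero_mem_lowSupport).trans ?_
  rw [dist_zero_right, pi_norm_le_iff_of_nonneg (Finset.sum_nonneg fun i _ => hx i)]
  intro i
  rw [Real.norm_of_nonneg (hx i)]
  exact Finset.single_le_sum (fun j _ => hx j) (Finset.mem_univ i)

theorem continuous_slack : Continuous (slack : (ι → ℝ) → ℝ) := by
  unfold slack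
  fun_prop

theorem continuous_depth : Continuous (depth d : (ι → ℝ) → ℝ) :=
  Metric.continuous_infDist_pt _

theorem continuous_radial : Continuous (radial : (ι → ℝ) → ι → ℝ) := by
  have hpos (x : ι → ℝ) : max (∑ i, x i) (1 / 2) ≠ 0 :=
    (lt_max_of_lt_right one_half_pos).ne'
  unfold radial
  fun_prop (disch := exact hpos _)

theorem vertexSupport_radial (x : ι → ℝ) : vertexSupport (radial x) = vertexSupport x := by
  have hpos : (max (∑ i, x i) (1 / 2))⁻¹ ≠ 0 :=
    inv_ne_zero (lt_max_of_lt_right one_half_pos).ne'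
  ext i
  simp only [mem_vertexSupport, radial, Pi.smul_apply, smul_eq_mul, mul_ne_zero_iff, hpos, ne_eq,
    not_false_eq_true, true_and]

theorem radial_mem_simpFace {N : ℕ} {x : Fin (N + 1) → ℝ} (hx : ∀ i, 0 ≤ x i)
    (hsum : 1 / 2 ≤ ∑ i, x i) : radial x ∈ simpFace (vertexSupport x) := by
  refine mem_simpFace_iff.2 ⟨⟨fun i => ?_, ?_⟩, (vertexSupport_radial x).subset⟩
  · exact mul_nonneg (inv_nonneg.2 (by positivity)) (hx i)
  · simp only [radial, max_eq_left hsum, Pi.smul_apply, smul_eq_mul, ← Finset.mul_sum]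
    exact inv_mul_cancel₀ (one_half_pos.trans_le hsum).ne'

end Coordinates

section LiftMap

variable {ι E : Type*} [Fintype ι] [TopologicalSpace E] {Γ : C(I × (ι → ℝ), E)} {l : C(E, I)}
  {g : (ι → ℝ) → E} {d : ℕ} {x : ι → ℝ} {p : E}

variable (Γ d) in
/-- The component in `E` of the lift of a family of maps `Γ t`: the parameter of the family is the
ratio of slack and depth. -/
def horizontalLift (x : ι → ℝ) : E :=
  Γ (projIcc 0 1 zero_le_one (slack x / depth d x), radial x)

variable (Γ l d) in
/-- The lift of a family of maps `Γ t` to a map to `E × ℝ`, constructed such that `x` is mapped to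
`(p, 0)` only if `Γ (l p)` maps the radial projection of `x` to `p`. -/
def liftMap (x : ι → ℝ) : E × ℝ :=
  (horizontalLift Γ d x, slack x - depth d x * l (horizontalLift Γ d x))

theorem continuous_liftMap (hΓ : ∀ t, ∀ x ∈ lowSupport ι d, Γ (t, x) = g x) :
    Continuous (liftMap Γ l d) := by
  have hhor : Continuous (horizontalLift Γ d) := by
    refine continuous_uncurry_comp Γ.continuous continuous_radial fun x => ?_
    by_cases hx : x ∈ lowSupport ι d
    · exact .inr ⟨_, fun t => hΓ t _ (by rwa [lowSupport, mem_ofPred_eq, vertexSupport_radial])⟩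
    · exact .inl (continuous_projIcc.continuousAt.comp
        (continuous_slack.continuousAt.div continuous_depth.continuousAt (depth_pos hx).ne'))
  have := continuous_slack (ι := ι)
  have := continuous_depth (ι := ι) (d := d)
  unfold liftMap
  fun_prop

theorem liftMap_snd_nonpos (hx : slack x = 0) : (liftMap Γ l d x).2 ≤ 0 := by
  rw [liftMap, hx, zero_sub, neg_nonpos]
  exact mul_nonneg depth_nonneg (l _).2.1

theorem liftMap_snd_nonneg (hx : 0 ≤ slack x) (hxd : x ∈ lowSupport ι d) :
    0 ≤ (liftMap Γ l d x).2 := by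
  rwa [liftMap, depth_eq_zero hxd, zero_mul, sub_zero]

theorem half_le_sum_of_liftMap_eq (hx : ∀ i, 0 ≤ x i) (h : liftMap Γ l d x = (p, 0)) :
    1 / 2 ≤ ∑ i, x i := by
  have hslack : slack x = depth d x * l (horizontalLift Γ d x) :=
    sub_eq_zero.1 (congrArg Prod.snd h)
  have : slack x ≤ ∑ i, x i := calc
    slack x ≤ depth d x := hslack.trans_le (mul_le_of_le_one_right depth_nonneg (l _).2.2)
    _ ≤ ∑ i, x i := depth_le_sum hx
  rw [slack] at this
  linarith

theorem apply_radial_eq_of_liftMap_eq (h : liftMap Γ l d x = (p, 0)) (hx : x ∉ lowSupport ι d) :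
    Γ (l p, radial x) = p := by
  have hp : horizontalLift Γ d x = p := congrArg Prod.fst h
  have hslack : slack x - depth d x * l (horizontalLift Γ d x) = 0 := congrArg Prod.snd h
  have hratio : slack x / depth d x = l p := by
    rw [div_eq_iff (depth_pos hx).ne', ← hp, mul_comm, sub_eq_zero.1 hslack]
  rwa [horizontalLift, hratio, projIcc_val] at hp

end LiftMap

section WindingPartition

variable {N d : ℕ} {Γ : C(I × (Fin (N + 1) → ℝ), Euc d)} {l : C(Euc d, I)}
  {g : (Fin (N + 1) → ℝ) → Euc d} {x : Fin (N + 1) → ℝ} {p : Euc d}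

theorem mem_image_of_liftMap_eq (hΓ : ∀ t, ∀ x ∈ lowSupport _ d, Γ (t, x) = g x)
    (hx : ∀ i, 0 ≤ x i) (h : liftMap Γ l d x = (p, 0)) (hxd : (vertexSupport x).card ≤ d) :
    p ∈ g '' simpFace (vertexSupport x) := by
  have hp : horizontalLift Γ d x = p := congrArg Prod.fst h
  refine ⟨radial x, radial_mem_simpFace hx (half_le_sum_of_liftMap_eq hx h), ?_⟩
  rwa [horizontalLift, hΓ _ _ (by rwa [lowSupport, mem_ofPred_eq, vertexSupport_radial])] at hp

theorem inWne_of_liftMap_eq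
    (hΓ : ∀ T : Finset (Fin (N + 1)), T.card = d + 1 → ¬ InWne d g T p →
      ∀ x ∈ simpFace T, Γ (l p, x) ≠ p)
    (hx : ∀ i, 0 ≤ x i) (h : liftMap Γ l d x = (p, 0)) (hxd : (vertexSupport x).card = d + 1) :
    InWne d g (vertexSupport x) p := by
  by_contra hW
  exact hΓ _ hxd hW _ (radial_mem_simpFace hx (half_le_sum_of_liftMap_eq hx h))
    (apply_radial_eq_of_liftMap_eq h (by rw [lowSupport, mem_ofPred_eq]; lia))

theorem vertexSupport_nonempty_of_liftMap_eq (hx : ∀ i, 0 ≤ x i) (h : liftMap Γ l d x = (p, 0)) :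
    (vertexSupport x).Nonempty := by
  by_contra hempty
  have hsum : ∑ i, x i = 0 := Finset.sum_eq_zero fun i _ =>
    vertexSupport_subset_iff.1 (Finset.not_nonempty_iff_eq_empty.1 hempty).subset i
      (Finset.notMem_empty i)
  linarith [half_le_sum_of_liftMap_eq hx h]

end WindingPartition

end Lift

section Coincidence

open Set
open scoped unitInterval

section Counting

variable {V : Type*} [Fintype V] {d : ℕ} {P : Finset (Finset V)}

theorem sum_card_filter_add_sum_card_filter_not_le (hP : (P : Set (Finset V)).PairwiseDisjoint id) :
    ∑ S ∈ P with S.card ≤ d, S.card + ∑ S ∈ P with ¬ S.card ≤ d, S.card ≤ Fintype.card V := by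
  classical
  rw [Finset.sum_filter_add_sum_filter_not]
  exact (Finset.card_biUnion hP).symm.trans_le (Finset.card_le_univ _)

theorem hasNonposExpectedDim_filter (hP : (P : Set (Finset V)).PairwiseDisjoint id)
    (hlow : ∃ S ∈ P, S.card ≤ d) (hV : Fintype.card V + d ≤ (d + 1) * P.card) :
    HasNonposExpectedDim d {S ∈ P | S.card ≤ d} := by
  refine ⟨hlow.imp fun S => Finset.mem_filter.2, hP.subset (P.filter_subset _), ?_⟩
  have hsum := sum_card_filter_add_sum_card_filter_not_le (d := d) hP
  have hcard := P.card_filter_add_card_filter_not fun S => S.card ≤ d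
  have hhigh := Finset.card_nsmul_le_sum {S ∈ P | ¬ S.card ≤ d} Finset.card (d + 1)
    fun S hS => not_le.1 (Finset.mem_filter.1 hS).2
  rw [smul_eq_mul] at hhigh
  rw [← hcard] at hV
  linarith

theorem card_le_of_sum_card_filter_eq (hP : (P : Set (Finset V)).PairwiseDisjoint id)
    (hV : Fintype.card V + d ≤ (d + 1) * P.card)
    (heq : ∑ S ∈ P with S.card ≤ d, S.card + d = (d + 1) * {S ∈ P | S.card ≤ d}.card) :
    ∀ S ∈ P, S.card ≤ d + 1 := by
  by_contra! ⟨S, hS, hSd⟩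
  have hsum := sum_card_filter_add_sum_card_filter_not_le (d := d) hP
  have hcard := P.card_filter_add_card_filter_not fun S => S.card ≤ d
  have hhigh : ∑ _S ∈ P with ¬ _S.card ≤ d, (d + 1) < ∑ S ∈ P with ¬ S.card ≤ d, S.card :=
    Finset.sum_lt_sum (fun S hS => not_le.1 (Finset.mem_filter.1 hS).2)
      ⟨S, Finset.mem_filter.2 ⟨hS, by lia⟩, hSd⟩
  rw [Finset.sum_const, smul_eq_mul] at hhigh
  rw [← hcard] at hV
  linarith

end Counting

variable {N d : ℕ} {g : (Fin (N + 1) → ℝ) → Euc d}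

/-- The values that `g` attains simultaneously on pairwise disjoint faces whose images have an
intersection of nonpositive expected dimension. -/
def exceptionalValues (g : (Fin (N + 1) → ℝ) → Euc d) : Set (Euc d) :=
  ⋃ B ∈ {B : Finset (Finset (Fin (N + 1))) | HasNonposExpectedDim d B}, ⋂ S ∈ B, g '' simpFace S

theorem IsGeneric.finite_exceptionalValues (hg : IsGeneric g) : (exceptionalValues g).Finite :=
  (toFinite _).biUnion fun B hB => (hg B hB).1

theorem IsGeneric.mem_exceptionalValues_and_card_le {P : Finset (Finset (Fin (N + 1)))}
    {p : Euc d} (hg : IsGeneric g) (hP : (P : Set (Finset (Fin (N + 1)))).PairwiseDisjoint id)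
    (hlow : ∃ S ∈ P, S.card ≤ d) (hN : N + 1 + d ≤ (d + 1) * P.card)
    (hp : ∀ S ∈ P, S.card ≤ d → p ∈ g '' simpFace S) :
    p ∈ exceptionalValues g ∧ ∀ S ∈ P, S.card ≤ d + 1 := by
  have hV : Fintype.card (Fin (N + 1)) + d ≤ (d + 1) * P.card := by rwa [Fintype.card_fin]
  have hB := hasNonposExpectedDim_filter hP hlow hV
  have hpB : p ∈ ⋂ S ∈ ({S ∈ P | S.card ≤ d} : Finset _), g '' simpFace S :=
    mem_iInter₂.2 fun S hS => hp S (Finset.mem_filter.1 hS).1 (Finset.mem_filter.1 hS).2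
  exact ⟨mem_biUnion hB hpB, card_le_of_sum_card_filter_eq hP hV ((hg _ hB).2 ⟨p, hpB⟩)⟩

section LiftMap

variable {α : Type*} {P : Finset α} {x : α → Fin (N + 1) → ℝ} {Γ : C(I × (Fin (N + 1) → ℝ), Euc d)}
  {l : C(Euc d, I)}

theorem liftMap_snd_eq_zero {y : Euc d × ℝ} (hslack : ∀ a ∈ P, 0 ≤ slack (x a))
    (hfull : ∃ a ∈ P, slack (x a) = 0) (hlow : ∃ a ∈ P, x a ∈ lowSupport _ d)
    (hy : ∀ a ∈ P, liftMap Γ l d (x a) = y) : y.2 = 0 := by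
  obtain ⟨a, ha, hxa⟩ := hfull
  obtain ⟨b, hb, hxb⟩ := hlow
  exact le_antisymm (hy a ha ▸ liftMap_snd_nonpos hxa)
    (hy b hb ▸ liftMap_snd_nonneg (hslack b hb) hxb)

theorem IsGeneric.isWindingPartition_of_liftMap_eq (hg : IsGeneric g) (hd : 1 ≤ d)
    (hN : N + 1 + d ≤ (d + 1) * P.card)
    (hΓ : ∀ t, ∀ x ∈ lowSupport _ d, Γ (t, x) = g x)
    (hΓW : ∀ p ∈ exceptionalValues g, ∀ T : Finset (Fin (N + 1)), T.card = d + 1 →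
      ¬ InWne d g T p → ∀ x ∈ simpFace T, Γ (l p, x) ≠ p)
    (hx : ∀ a ∈ P, ∀ i, 0 ≤ x a i) (hslack : ∀ a ∈ P, 0 ≤ slack (x a))
    (hfull : ∃ a ∈ P, slack (x a) = 0)
    (hdisj : (P : Set α).PairwiseDisjoint fun a => vertexSupport (x a)) {y : Euc d × ℝ}
    (hy : ∀ a ∈ P, liftMap Γ l d (x a) = y) :
    IsWindingPartition d P.card g (P.image fun a => vertexSupport (x a)) := by
  obtain ⟨a₀, ha₀, hlow⟩ : ∃ a ∈ P, (vertexSupport (x a)).card ≤ d := by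
    simpa only [Finset.inter_univ] using exists_card_inter_le_of_card_lt (U := Finset.univ)
      hdisj (by rw [Finset.card_univ, Fintype.card_fin]; lia)
  obtain ⟨p, t⟩ := y
  obtain rfl : t = 0 := liftMap_snd_eq_zero hslack hfull ⟨a₀, ha₀, hlow⟩ hy
  have hne (a : α) (ha : a ∈ P) : (vertexSupport (x a)).Nonempty :=
    vertexSupport_nonempty_of_liftMap_eq (hx a ha) (hy a ha)
  have hinj : InjOn (fun a => vertexSupport (x a)) P := fun a ha b hb hab =>
    PairwiseDisjoint.elim hdisj ha hb fun h =>
      (hne a ha).ne_empty (disjoint_self.1 (h.mono_right hab.le))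
  have hcard := Finset.card_image_of_injOn hinj
  have hdisj' : ((P.image fun a => vertexSupport (x a) : Finset _) :
      Set (Finset (Fin (N + 1)))).PairwiseDisjoint id := by
    rw [Finset.coe_image]
    exact hinj.pairwiseDisjoint_image.2 hdisj
  have himage : ∀ S ∈ P.image fun a => vertexSupport (x a), S.card ≤ d → p ∈ g '' simpFace S :=
    Finset.forall_mem_image.2 fun a ha =>
      mem_image_of_liftMap_eq hΓ (hx a ha) (hy a ha)
  obtain ⟨hp, hle⟩ := hg.mem_exceptionalValues_and_card_le hdisj'
    ⟨_, Finset.mem_image_of_mem _ ha₀, hlow⟩ (hcard.symm ▸ hN) himage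
  have hWne : ∀ S ∈ P.image fun a => vertexSupport (x a), S.card = d + 1 → InWne d g S p :=
    Finset.forall_mem_image.2 fun a ha => inWne_of_liftMap_eq (hΓW p hp) (hx a ha) (hy a ha)
  exact ⟨hcard, Finset.forall_mem_image.2 hne, hle, fun S hS T hT => hdisj' hS hT, p,
    fun S hS => ⟨himage S hS, hWne S hS⟩⟩

end LiftMap

end Coincidence

section Restriction

open Set

variable {κ : Type*} [Fintype κ] {M : ℕ} (e : κ ↪ Fin (M + 1)) {S : Finset (Fin (M + 1))}
  {z : Fin (M + 1) → ℝ}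

theorem slack_comp_nonneg (hz : z ∈ stdSimp M) : 0 ≤ slack (z ∘ e) := by
  rw [slack, ← hz.2, sub_nonneg]
  exact (Finset.sum_map Finset.univ e z).symm.trans_le (Finset.sum_le_univ_sum_of_nonneg hz.1)

theorem slack_comp_eq_zero (hz : z ∈ simpFace S) (hS : S ⊆ Finset.univ.map e) :
    slack (z ∘ e) = 0 := by
  rw [slack, ← hz.1.2, sub_eq_zero,
    ← Finset.sum_subset (Finset.subset_univ (Finset.univ.map e)) fun i _ hi =>
      hz.2 i fun h => hi (hS h)]
  exact Finset.sum_map Finset.univ e z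

theorem map_vertexSupport_comp_subset (hz : z ∈ simpFace S) :
    (vertexSupport (z ∘ e)).map e ⊆ S := by
  refine Finset.map_subset_iff_subset_preimage.2 fun i hi => Finset.mem_preimage.2 ?_
  by_contra h
  exact mem_vertexSupport.1 hi (hz.2 _ h)

end Restriction

section Main

open Set

variable {N M d q : ℕ}

theorem IsGeneric.exists_forall_isTverbergPartition {g : (Fin (N + 1) → ℝ) → Euc d}
    (hg : IsGeneric g) (hgc : Continuous g) (hd : 1 ≤ d) (hN : N + 1 + d ≤ (d + 1) * q)
    (hNM : N ≤ M) (hMq : M < N + q) :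
    ∃ F : (Fin (M + 1) → ℝ) → Euc (d + 1), Continuous F ∧
      ∀ P, IsTverbergPartition q F P → ∃ P', IsWindingPartition d q g P' := by
  obtain ⟨l, hl⟩ := exists_continuousMap_injOn_unitInterval hg.finite_exceptionalValues
  obtain ⟨Γ, hΓ, hΓW⟩ := exists_family_forall_ne ⟨g, hgc⟩ hg.finite_exceptionalValues hl
  let e : Fin (N + 1) ↪ Fin (M + 1) := Fin.castLEEmb (Nat.succ_le_succ hNM)
  let φ : (Euc d × ℝ) ≃L[ℝ] Euc (d + 1) := ContinuousLinearEquiv.ofFinrankEq (by simp)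
  refine ⟨fun z => φ (liftMap Γ l d (z ∘ e)), φ.continuous.comp
    ((continuous_liftMap hΓ).comp (by fun_prop)), fun P ⟨hq, _, hdisj, p, hp⟩ => ?_⟩
  choose! z hz hzp using mem_iInter₂.1 hp
  obtain ⟨S, hS, hSe⟩ := exists_card_inter_le_of_card_lt (P := P) (s := id) (d := 0)
    (U := (Finset.univ.map e)ᶜ) hdisj (by
      rw [Finset.card_compl, Finset.card_map, Finset.card_univ, Fintype.card_fin, Fintype.card_fin]
      lia)
  have hfull : slack (z S ∘ e) = 0 := slack_comp_eq_zero e (hz S hS) <|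
    disjoint_compl_right_iff.1 <|
      Finset.disjoint_iff_inter_eq_empty.2 (Finset.card_eq_zero.1 (Nat.le_zero.1 hSe))
  have hsupp : (P : Set (Finset (Fin (M + 1)))).PairwiseDisjoint
      fun S => vertexSupport (z S ∘ e) := fun S hS T hT hne => (Finset.disjoint_map e).1 <|
    (hdisj S hS T hT hne).mono (map_vertexSupport_comp_subset e (hz S hS))
      (map_vertexSupport_comp_subset e (hz T hT))
  exact hq ▸ ⟨_, hg.isWindingPartition_of_liftMap_eq hd (hq.symm ▸ hN) hΓ hΓW
    (fun S hS i => (hz S hS).1.1 _) (fun S hS => slack_comp_nonneg e (hz S hS).1) ⟨S, hS, hfull⟩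
    hsupp fun S hS => φ.injective ((hzp S hS).trans (φ.apply_symm_apply p).symm)⟩

end Main

theorem winding_iff_topologicalTverberg_general {q : ℕ} (hq : 1 ≤ q) :
    (∀ d : ℕ, 1 ≤ d →
      ∀ f : (Fin ((d + 1) * (q - 1) + 1) → ℝ) → Euc d,
        ContinuousOn f (skel ((d + 1) * (q - 1)) (d - 1)) →
        ∃ P : Finset (Finset (Fin ((d + 1) * (q - 1) + 1))), IsWindingPartition d q f P) ↔
    (∀ d : ℕ, 1 ≤ d →
      ∀ F : (Fin ((d + 1) * (q - 1) + 1) → ℝ) → Euc d,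
        ContinuousOn F (stdSimp ((d + 1) * (q - 1))) →
        ∃ P : Finset (Finset (Fin ((d + 1) * (q - 1) + 1))), IsTverbergPartition q F P) := by
  constructor
  · intro winding d hd F hF
    obtain ⟨P, hP⟩ := winding d hd F (hF.mono fun x hx => hx.1)
    exact ⟨P, hP.isTverbergPartition hF⟩
  · intro tverberg d hd f hf
    have hcard : (d + 1) * (q - 1) + 1 + d = (d + 1) * q := by
      obtain ⟨k, rfl⟩ := Nat.exists_eq_add_of_le' hq
      rw [Nat.add_sub_cancel]
      ring
    obtain ⟨f', hf'⟩ := exists_continuousMap_eqOn (isClosed_skel _ _) hf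
    obtain ⟨g, hgc, hg, hgf⟩ := exists_seq_isGeneric_tendstoUniformlyOn f'.continuous
    have hskel := skel_eq_inter_lowSupport ((d + 1) * (q - 1)) (d - 1)
    rw [Nat.sub_add_cancel hd] at hskel
    refine exists_isWindingPartition_of_tendstoUniformlyOn (by lia)
      (fun n => (hgc n).continuousOn)
      ((hgf.mono Set.inter_subset_left).congr_right (hskel ▸ hf')) fun n => ?_
    obtain ⟨F, hF, hFg⟩ := (hg n).exists_forall_isTverbergPartition (hgc n) hd hcard.le
      (M := (d + 1 + 1) * (q - 1)) (by lia) (by lia)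
    exact (tverberg (d + 1) le_add_self F hF.continuousOn).elim hFg

/-- The Winding Number Conjecture is equivalent to the Topological Tverberg Theorem. -/
theorem winding_iff_topologicalTverberg :
    (∀ d q : ℕ, 1 ≤ d → 1 ≤ q →
      ∀ f : (Fin ((d+1)*(q-1)+1) → ℝ) → Euc d,
        ContinuousOn f (skel ((d+1)*(q-1)) (d-1)) →
        ∃ P : Finset (Finset (Fin ((d+1)*(q-1)+1))), IsWindingPartition d q f P) ↔
    (∀ d q : ℕ, 1 ≤ d → 1 ≤ q →
      ∀ F : (Fin ((d+1)*(q-1)+1) → ℝ) → Euc d,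
        ContinuousOn F (stdSimp ((d+1)*(q-1))) →
        ∃ P : Finset (Finset (Fin ((d+1)*(q-1)+1))), IsTverbergPartition q F P) :=
  ⟨fun h d q hd hq =>
      (winding_iff_topologicalTverberg_general hq).1 (fun d hd => h d q hd hq) d hd,
    fun h d q hd hq =>
      (winding_iff_topologicalTverberg_general hq).2 (fun d hd => h d q hd hq) d hd⟩
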